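/- Let 𝕏 be a σ-finite measure space and ℳ, 𝒩 Banach L^0(𝕏)-modules. A pointwise norm |·|_c on ℳ ⊗ 𝒩 is a reasonable pointwise crossnorm if and only if |α|_ε ≤ |α|_c ≤ |α|_π for every α ∈ ℳ ⊗ 𝒩. -/

import Mathlib

/-!
A reasonable crossnorm dominates `|·|_ε` because an element of the dual unit disc has a pointwise
norm in `[0, 1]`, and it is dominated by `|·|_π` by the triangle inequality applied to each
representation. Conversely, `c ≤ |·|_π` evaluated at the representation `v ⊗ w` gives (i). For
(ii), the functionals are normalised: with `dω = |ω|`, the functional `dω⁻¹ ω` (where `0⁻¹ = 0`)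
lies in the unit disc, and multiplying back by `dω` recovers `ω`, since `|ω v| ≤ dω |v|` forces
`ω v` to vanish where `dω` does (`abs_le_of_isGLB`, `inDualDisc_pinv_smul`, `L0.mul_pinv_mul`).

All suprema and infima involved have to be shown to exist in `L⁰`. This is Dedekind completeness
(`L0.exists_isGLB`), where σ-finiteness enters through an equivalent finite measure.
-/


open MeasureTheory Filter Set TensorProduct

noncomputable section

namespace Paper

variable {X : Type*} [MeasurableSpace X]

/-- The space `L⁰(𝕏)` of real-valued measurable functions up to `μ`-a.e. equality. -/
abbrev L0 (μ : Measure X) : Type _ := X →ₘ[μ] ℝ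

instance (μ : Measure X) : CommRing (L0 μ) :=
  { (inferInstance : AddCommGroup (L0 μ)), (inferInstance : CommMonoid (L0 μ)) with
    left_distrib := fun a b c => AEEqFun.toGerm_injective <| by
      simp only [AEEqFun.mul_toGerm, AEEqFun.add_toGerm, mul_add]
    right_distrib := fun a b c => AEEqFun.toGerm_injective <| by
      simp only [AEEqFun.mul_toGerm, AEEqFun.add_toGerm, add_mul]
    zero_mul := fun a => AEEqFun.toGerm_injective <| by
      simp only [AEEqFun.mul_toGerm, AEEqFun.zero_toGerm, zero_mul]
    mul_zero := fun a => AEEqFun.toGerm_injective <| by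
      simp only [AEEqFun.mul_toGerm, AEEqFun.zero_toGerm, mul_zero] }

/-- The distance on `L⁰(𝕏)` inducing the topology of convergence in measure, defined through
the auxiliary finite measure `μ.toFinite` (which satisfies `μ ≪ μ.toFinite ≪ μ`). -/
noncomputable def dL0 (μ : Measure X) [SFinite μ] (f g : L0 μ) : ℝ :=
  ∫ x, min |f x - g x| 1 ∂(μ.toFinite)

/-- A Banach `L⁰(𝕏)`-module: a module over `L⁰(𝕏)` endowed with a pointwise norm, complete
with respect to the induced distance. -/
class BanachMod (μ : Measure X) [SFinite μ] (M : Type*) [AddCommGroup M]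
    [Module (L0 μ) M] where
  pn : M → L0 μ
  pn_nonneg : ∀ v : M, 0 ≤ pn v
  pn_eq_zero : ∀ v : M, pn v = 0 ↔ v = 0
  pn_add_le : ∀ v w : M, pn (v + w) ≤ pn v + pn w
  pn_smul : ∀ (f : L0 μ) (v : M), pn (f • v) = |f| * pn v
  complete : ∀ u : ℕ → M,
    (∀ ε : ℝ, 0 < ε → ∃ N : ℕ, ∀ m ≥ N, ∀ n ≥ N, dL0 μ (pn (u m - u n)) 0 < ε) →
    ∃ v : M, Tendsto (fun n => dL0 μ (pn (u n - v)) 0) atTop (nhds 0)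

/-- The pointwise norm of a Banach `L⁰(𝕏)`-module, with the measure explicit. -/
noncomputable def pn (μ : Measure X) [SFinite μ] {M : Type*} [AddCommGroup M]
    [Module (L0 μ) M] [BanachMod μ M] (v : M) : L0 μ :=
  BanachMod.pn v

/-- The distance on a Banach `L⁰(𝕏)`-module. -/
noncomputable def dM (μ : Measure X) [SFinite μ] {M : Type*} [AddCommGroup M]
    [Module (L0 μ) M] [BanachMod μ M] (v w : M) : ℝ :=
  dL0 μ (pn μ (v - w)) 0

section Defs

variable (μ : Measure X) [SFinite μ]
variable {M N : Type*} [AddCommGroup M] [Module (L0 μ) M] [BanachMod μ M]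
  [AddCommGroup N] [Module (L0 μ) N] [BanachMod μ N]

/-- The set of admissible bounds of a map between Banach `L⁰(𝕏)`-modules; the pointwise norm
`|T|` of a homomorphism is the infimum of this set. -/
def homBddSet (T : M → N) : Set (L0 μ) :=
  {g | 0 ≤ g ∧ ∀ v, pn μ (T v) ≤ g * pn μ v}

/-- A homomorphism of Banach `L⁰(𝕏)`-modules: an `L⁰(𝕏)`-linear map admitting a bound
`g ∈ L⁰(𝕏)⁺` with `|T v| ≤ g |v|` (equivalently, `L⁰(𝕏)`-linear and continuous). -/
def IsHom (T : M →ₗ[L0 μ] N) : Prop :=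
  ∃ g, g ∈ homBddSet μ (⇑T)

/-- The set of admissible bounds of an `L⁰(𝕏)`-valued map (for elements of the dual module). -/
def dualBddSet (ω : M → L0 μ) : Set (L0 μ) :=
  {g | 0 ≤ g ∧ ∀ v, |ω v| ≤ g * pn μ v}

/-- Membership in the dual module `ℳ*`: an `L⁰(𝕏)`-linear map `ω : ℳ → L⁰(𝕏)` admitting a
bound `g ∈ L⁰(𝕏)⁺` with `|ω v| ≤ g |v|`. -/
def IsDual (ω : M →ₗ[L0 μ] L0 μ) : Prop :=
  ∃ g, g ∈ dualBddSet μ (⇑ω)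

/-- Membership in the unit disc `𝔻_{ℳ*}` of the dual module: `|ω| ≤ 1`, equivalently
`|ω v| ≤ |v|` for every `v`. -/
def InDualDisc (ω : M →ₗ[L0 μ] L0 μ) : Prop :=
  ∀ v, |ω v| ≤ pn μ v

/-- The family of pointwise norms `|s - ∑_{i ∈ F ∪ G} v i|` for `G` finite disjoint from `F`,
whose `F`-indexed inf-sup being `0` defines `s = ∑_{i∈I} v i`. -/
def sumUB {I : Type*} (v : I → M) (s : M) (F : Finset I) : Set (L0 μ) :=
  {g | ∃ G : Finset I, Disjoint G F ∧ g = pn μ (s - (∑ i ∈ F, v i + ∑ i ∈ G, v i))}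

/-- `HasSumMod μ v s` means that the family `{v_i}` is summable in the Banach `L⁰(𝕏)`-module
with sum `s`, i.e. `⋀_F ⋁_G |s - ∑_{i ∈ F ∪ G} v_i| = 0` (the inner suprema being the values
of `b`, and the outer infimum being `0`). -/
def HasSumMod {I : Type*} (v : I → M) (s : M) : Prop :=
  ∃ b : Finset I → L0 μ, (∀ F, IsLUB (sumUB μ v s F) (b F)) ∧ IsGLB (Set.range b) 0

/-- A family in a Banach `L⁰(𝕏)`-module is summable if it has a sum. -/
def SummableMod {I : Type*} (v : I → M) : Prop :=
  ∃ s, HasSumMod μ v s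

/-- The partial sums `∑_{i ∈ F} |v i|` of the pointwise norms of a family; the element `|v|₁`
of `ℓ₁(I, ℳ)` is the supremum of this set. -/
def l1PartialSums {I : Type*} (v : I → M) : Set (L0 μ) :=
  {g | ∃ F : Finset I, g = ∑ i ∈ F, pn μ (v i)}

/-- Membership in `ℓ₁(I, ℳ)`: the partial sums of the pointwise norms admit a supremum
(equivalently, an upper bound) in `L⁰(𝕏)`. -/
def Meml1 {I : Type*} (v : I → M) : Prop :=
  ∃ b, IsLUB (l1PartialSums μ v) b

/-- The partial sums `∑_{i ∈ F} |v i|` for an `L⁰(𝕏)`-valued family. -/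
def l1PartialSumsF {I : Type*} (v : I → L0 μ) : Set (L0 μ) :=
  {g | ∃ F : Finset I, g = ∑ i ∈ F, |v i|}

/-- Membership in `ℓ₁(I, L⁰(𝕏))`. -/
def Meml1F {I : Type*} (v : I → L0 μ) : Prop :=
  ∃ b, IsLUB (l1PartialSumsF μ v) b

/-- The set whose infimum defines the projective pointwise norm: all values
`∑_{i=1}^n |v_i||w_i|` over representations `α = ∑_{i=1}^n v_i ⊗ w_i`. -/
def piReps (α : M ⊗[L0 μ] N) : Set (L0 μ) :=
  {g | ∃ (n : ℕ) (v : Fin n → M) (w : Fin n → N),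
    α = ∑ i, v i ⊗ₜ[L0 μ] w i ∧ g = ∑ i, pn μ (v i) * pn μ (w i)}

/-- The set whose supremum defines the injective pointwise norm: all values
`|∑_{i=1}^n ω(v_i) η(w_i)|` over representations `α = ∑_{i=1}^n v_i ⊗ w_i` and elements
`ω ∈ 𝔻_{ℳ*}`, `η ∈ 𝔻_{𝒩*}`. -/
def epsReps (α : M ⊗[L0 μ] N) : Set (L0 μ) :=
  {g | ∃ (n : ℕ) (v : Fin n → M) (w : Fin n → N)
    (ω : M →ₗ[L0 μ] L0 μ) (η : N →ₗ[L0 μ] L0 μ), InDualDisc μ ω ∧ InDualDisc μ η ∧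
    α = ∑ i, v i ⊗ₜ[L0 μ] w i ∧ g = |∑ i, ω (v i) * η (w i)|}

/-- `IsPiTensor μ M N P e` states that the Banach `L⁰(𝕏)`-module `P`, together with the
`L⁰(𝕏)`-linear map `e` defined on the algebraic tensor product, realizes the projective
tensor product `ℳ ⊗̂_π 𝒩`: the pointwise norm of `e α` is the projective pointwise norm
`|α|_π` and the image of `e` is dense. -/
structure IsPiTensor (M N P : Type*) [AddCommGroup M] [Module (L0 μ) M] [BanachMod μ M]
    [AddCommGroup N] [Module (L0 μ) N] [BanachMod μ N]
    [AddCommGroup P] [Module (L0 μ) P] [BanachMod μ P]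
    (e : M ⊗[L0 μ] N →ₗ[L0 μ] P) : Prop where
  pn_emb : ∀ α : M ⊗[L0 μ] N, IsGLB (piReps μ α) (pn μ (e α))
  dense : ∀ p : P, ∀ ε : ℝ, 0 < ε → ∃ α : M ⊗[L0 μ] N, dM μ (e α) p < ε

/-- `IsEpsTensor μ M N P e` states that the Banach `L⁰(𝕏)`-module `P`, together with the
`L⁰(𝕏)`-linear map `e` defined on the algebraic tensor product, realizes the injective
tensor product `ℳ ⊗̂_ε 𝒩`: the pointwise norm of `e α` is the injective pointwise norm
`|α|_ε` and the image of `e` is dense. -/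
structure IsEpsTensor (M N P : Type*) [AddCommGroup M] [Module (L0 μ) M] [BanachMod μ M]
    [AddCommGroup N] [Module (L0 μ) N] [BanachMod μ N]
    [AddCommGroup P] [Module (L0 μ) P] [BanachMod μ P]
    (e : M ⊗[L0 μ] N →ₗ[L0 μ] P) : Prop where
  pn_emb : ∀ α : M ⊗[L0 μ] N, IsLUB (epsReps μ α) (pn μ (e α))
  dense : ∀ p : P, ∀ ε : ℝ, 0 < ε → ∃ α : M ⊗[L0 μ] N, dM μ (e α) p < ε

end Defs

/-! ### The order and ring structure of `L⁰` -/

section Order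

variable {μ : Measure X}

instance : IsOrderedAddMonoid (L0 μ) where
  add_le_add_left a b hab c := by
    rw [← AEEqFun.coeFn_le] at hab ⊢
    filter_upwards [hab, AEEqFun.coeFn_add a c, AEEqFun.coeFn_add b c] with x h h1 h2
    rw [h1, h2]
    exact add_le_add_left h _

lemma L0.mul_le_mul {a b c d : L0 μ} (hab : a ≤ b) (hcd : c ≤ d) (hc : 0 ≤ c) (hb : 0 ≤ b) :
    a * c ≤ b * d := by
  rw [← AEEqFun.coeFn_le] at hab hcd hc hb ⊢
  filter_upwards [hab, hcd, hc, hb, AEEqFun.coeFn_mul a c, AEEqFun.coeFn_mul b d,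
    AEEqFun.coeFn_zero (β := ℝ) (μ := μ)] with x h1 h2 h3 h4 h5 h6 h7
  rw [h5, h6]
  rw [h7] at h3 h4
  exact _root_.mul_le_mul h1 h2 h3 h4

lemma L0.mul_nonneg {a b : L0 μ} (ha : 0 ≤ a) (hb : 0 ≤ b) : 0 ≤ a * b := by
  simpa using L0.mul_le_mul ha hb le_rfl ha

lemma L0.abs_mul (a b : L0 μ) : |a * b| = |a| * |b| := by
  apply AEEqFun.ext
  filter_upwards [AEEqFun.coeFn_abs (a * b), AEEqFun.coeFn_mul a b, AEEqFun.coeFn_mul |a| |b|,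
    AEEqFun.coeFn_abs a, AEEqFun.coeFn_abs b] with x h1 h2 h3 h4 h5
  rw [h1, h2, h3, Pi.mul_apply, Pi.mul_apply, h4, h5, _root_.abs_mul]

lemma L0.zero_le_one : (0 : L0 μ) ≤ 1 := by
  rw [← AEEqFun.coeFn_le]
  filter_upwards [AEEqFun.coeFn_zero (β := ℝ) (μ := μ),
    AEEqFun.coeFn_one (β := ℝ) (μ := μ)] with x h1 h2
  rw [h1, h2]
  simp

lemma L0.abs_sum_le {n : ℕ} (f : Fin n → L0 μ) : |∑ i, f i| ≤ ∑ i, |f i| :=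
  Finset.le_sum_of_subadditive (fun a : L0 μ => |a|) abs_zero.le abs_add_le _ _

/-- The pointwise inverse of `f ∈ L⁰`, with value `0` where `f` vanishes. -/
def L0.pinv (f : L0 μ) : L0 μ := AEEqFun.compMeasurable (fun t : ℝ => t⁻¹) measurable_inv f

lemma L0.coeFn_pinv (f : L0 μ) : ⇑(L0.pinv f) =ᵐ[μ] fun x => (f x)⁻¹ :=
  AEEqFun.coeFn_compMeasurable _ _ _

lemma L0.pinv_nonneg {f : L0 μ} (hf : 0 ≤ f) : 0 ≤ L0.pinv f := by
  rw [← AEEqFun.coeFn_le] at hf ⊢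
  filter_upwards [hf, L0.coeFn_pinv f, AEEqFun.coeFn_zero (β := ℝ) (μ := μ)] with x h1 h2 h3
  rw [h2, h3]
  rw [h3] at h1
  exact inv_nonneg.mpr h1

/-- If `|a| ≤ f p`, then `a` vanishes wherever `f` does, so `f⁻¹` cancels on `a`. -/
lemma L0.mul_pinv_mul {f a p : L0 μ} (h : |a| ≤ f * p) : f * (L0.pinv f * a) = a := by
  rw [← AEEqFun.coeFn_le] at h
  apply AEEqFun.ext
  filter_upwards [h, AEEqFun.coeFn_mul f (L0.pinv f * a), AEEqFun.coeFn_mul (L0.pinv f) a,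
    AEEqFun.coeFn_mul f p, L0.coeFn_pinv f, AEEqFun.coeFn_abs a] with x h0 h1 h2 h3 h4 h5
  rw [h5, h3, Pi.mul_apply] at h0
  rw [h1, Pi.mul_apply, h2, Pi.mul_apply, h4]
  by_cases hx : f x = 0
  · rw [hx, zero_mul] at h0
    have : a x = 0 := abs_eq_zero.mp (le_antisymm h0 (abs_nonneg _))
    simp [this]
  · field_simp

/-- Division of `a ≤ g p` by `p`; where `p` vanishes the left-hand side is `0 ≤ g`. -/
lemma L0.pinv_mul_le {a g p : L0 μ} (hg : 0 ≤ g) (hp : 0 ≤ p) (h : a ≤ g * p) :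
    L0.pinv p * a ≤ g := by
  rw [← AEEqFun.coeFn_le] at h hg hp ⊢
  filter_upwards [h, hg, hp, AEEqFun.coeFn_mul (L0.pinv p) a, AEEqFun.coeFn_mul g p,
    L0.coeFn_pinv p, AEEqFun.coeFn_zero (β := ℝ) (μ := μ)] with x h0 h1 h2 h3 h4 h5 h6
  rw [h4, Pi.mul_apply] at h0
  rw [h6] at h1 h2
  rw [h3, Pi.mul_apply, h5]
  rcases (show (0 : ℝ) ≤ p x from h2).eq_or_lt with hx | hx
  · rw [← hx]
    simpa using h1
  · rw [mul_comm, ← div_eq_mul_inv, div_le_iff₀ hx]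
    exact h0

end Order

/-! ### Dedekind completeness of `L⁰` -/

section Dedekind

variable {μ : Measure X} [SigmaFinite μ]

lemma integrable_arctan {f : X → ℝ} (hf : Measurable f) :
    Integrable (fun x => Real.arctan (f x)) μ.toFinite := by
  refine Integrable.of_bound (C := Real.pi / 2)
    (Real.measurable_arctan.comp hf).aestronglyMeasurable (ae_of_all _ fun x => ?_)
  rw [Real.norm_eq_abs, abs_le]
  exact ⟨(Real.neg_pi_div_two_lt_arctan _).le, (Real.arctan_lt_pi_div_two _).le⟩

/-- Among the countable infima of members of `S`, one minimises `∫ arctan` with respect to the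
finite measure `μ.toFinite`; strict monotonicity of `arctan` makes it a lower bound of `S`. -/
theorem L0.exists_isGLB {S : Set (L0 μ)} (hne : S.Nonempty) (hbd : BddBelow S) :
    ∃ b, IsGLB S b := by
  obtain ⟨s₀, hs₀⟩ := hne
  obtain ⟨l, hl⟩ := hbd
  let G : (ℕ → S) → X → ℝ := fun u x => ⨅ n, (u n : L0 μ) x
  have hGm : ∀ u, Measurable (G u) := fun u => Measurable.iInf fun n => AEEqFun.measurable _
  have hbdd : ∀ u : ℕ → S, ∀ᵐ x ∂μ, BddBelow (range fun n => (u n : L0 μ) x) := by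
    intro u
    have : ∀ᵐ x ∂μ, ∀ n, l x ≤ (u n : L0 μ) x :=
      ae_all_iff.mpr fun n => AEEqFun.coeFn_le.mpr (hl (u n).2)
    filter_upwards [this] with x hx
    exact ⟨l x, by rintro _ ⟨n, rfl⟩; exact hx n⟩
  have hanti : ∀ u w : ℕ → S, range u ⊆ range w → ∀ᵐ x ∂μ, G w x ≤ G u x := by
    intro u w huw
    filter_upwards [hbdd w] with x hx
    refine le_ciInf fun n => ?_
    obtain ⟨m, hm⟩ := huw ⟨n, rfl⟩
    rw [← hm]
    exact ciInf_le hx m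
  let J : (ℕ → S) → ℝ := fun u => ∫ x, Real.arctan (G u x) ∂μ.toFinite
  have hfin := toFinite_absolutelyContinuous μ
  have hJ : ∀ u w : ℕ → S, range u ⊆ range w → J w ≤ J u := by
    intro u w huw
    refine integral_mono_ae (integrable_arctan (hGm w)) (integrable_arctan (hGm u)) ?_
    filter_upwards [hfin.ae_le (hanti u w huw)] with x hx
    exact Real.arctan_strictMono.monotone hx
  have hJbd : BddBelow (range J) := by
    refine ⟨∫ _, -(Real.pi / 2) ∂μ.toFinite, ?_⟩
    rintro _ ⟨u, rfl⟩
    exact integral_mono (integrable_const _) (integrable_arctan (hGm u))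
      fun x => (Real.neg_pi_div_two_lt_arctan _).le
  obtain ⟨a, -, ha, hamem⟩ := exists_seq_tendsto_sInf ⟨_, mem_range_self fun _ => ⟨s₀, hs₀⟩⟩ hJbd
  choose u hu using hamem
  -- Merging a minimising sequence of countable families attains the infimum of `J`.
  let w : ℕ → S := fun m => u m.unpair.1 m.unpair.2
  have hw : J w ≤ sInf (range J) := by
    refine ge_of_tendsto' ha fun k => ?_
    rw [← hu k]
    refine hJ _ _ ?_
    rintro _ ⟨n, rfl⟩
    exact ⟨Nat.pair k n, by simp [w]⟩
  have hgw : ⇑(AEEqFun.mk (G w) (hGm w).aestronglyMeasurable : L0 μ) =ᵐ[μ] G w :=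
    AEEqFun.coeFn_mk _ _
  refine ⟨AEEqFun.mk (G w) (hGm w).aestronglyMeasurable, fun h hh => ?_, fun t ht => ?_⟩
  · -- Adjoining `h` to the minimising family cannot decrease `J`.
    let w' : ℕ → S := fun n => Nat.casesOn n ⟨h, hh⟩ w
    have hsub : range w ⊆ range w' := by
      rintro _ ⟨n, rfl⟩
      exact ⟨n + 1, rfl⟩
    have hle := hanti w w' hsub
    have hJeq : J w' = J w :=
      le_antisymm (hJ _ _ hsub) (hw.trans (csInf_le hJbd (mem_range_self w')))
    have heq := (integral_eq_iff_of_ae_le (integrable_arctan (hGm w'))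
      (integrable_arctan (hGm w)) (by
        filter_upwards [hfin.ae_le hle] with x hx
        exact Real.arctan_strictMono.monotone hx)).mp hJeq
    rw [← AEEqFun.coeFn_le]
    filter_upwards [(absolutelyContinuous_toFinite μ).ae_le heq, hbdd w', hgw] with x h1 h2 h3
    rw [h3, ← Real.arctan_strictMono.injective h1]
    exact ciInf_le h2 0
  · rw [← AEEqFun.coeFn_le]
    have : ∀ᵐ x ∂μ, ∀ n, t x ≤ (w n : L0 μ) x :=
      ae_all_iff.mpr fun n => AEEqFun.coeFn_le.mpr (ht (w n).2)
    filter_upwards [this, hgw] with x h1 h2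
    rw [h2]
    exact le_ciInf h1

theorem L0.exists_isLUB {S : Set (L0 μ)} (hne : S.Nonempty) (hbd : BddAbove S) :
    ∃ b, IsLUB S b := by
  obtain ⟨b, hb⟩ := L0.exists_isGLB hne.neg hbd.neg
  exact ⟨-b, by simpa using hb.neg⟩

end Dedekind

/-! ### Functionals and the two extremal norms -/

section Functional

variable (μ : Measure X)
variable {M N : Type*} [AddCommGroup M] [Module (L0 μ) M] [AddCommGroup N] [Module (L0 μ) N]

/-- The functional `ω ⊗ η` on the algebraic tensor product. -/
abbrev tmap (ω : M →ₗ[L0 μ] L0 μ) (η : N →ₗ[L0 μ] L0 μ) : M ⊗[L0 μ] N →ₗ[L0 μ] L0 μ :=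
  TensorProduct.lift ((LinearMap.mul (L0 μ) (L0 μ)).compl₁₂ ω η)

lemma tmap_sum (ω : M →ₗ[L0 μ] L0 μ) (η : N →ₗ[L0 μ] L0 μ) {n : ℕ} (v : Fin n → M)
    (w : Fin n → N) : tmap μ ω η (∑ i, v i ⊗ₜ[L0 μ] w i) = ∑ i, ω (v i) * η (w i) := by
  simp [tmap]

end Functional

section Tensor

variable (μ : Measure X) [SigmaFinite μ]
variable {M N : Type*} [AddCommGroup M] [Module (L0 μ) M] [BanachMod μ M]
  [AddCommGroup N] [Module (L0 μ) N] [BanachMod μ N]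

lemma pn_nonneg (v : M) : 0 ≤ pn μ v := BanachMod.pn_nonneg v

/-- The infimum of the bounds of a functional is itself a bound: each quotient `|ω v| / |v|`
lies below every bound, hence below their infimum. -/
lemma abs_le_of_isGLB {ω : M →ₗ[L0 μ] L0 μ} (hω : IsDual μ ω) {d : L0 μ}
    (hd : IsGLB (dualBddSet μ ⇑ω) d) (v : M) : |ω v| ≤ d * pn μ v := by
  obtain ⟨g₀, -, hg₀⟩ := hω
  have hle : L0.pinv (pn μ v) * |ω v| ≤ d :=
    hd.2 fun g hg => L0.pinv_mul_le hg.1 (pn_nonneg μ v) (hg.2 v)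
  have hcancel : pn μ v * (L0.pinv (pn μ v) * |ω v|) = |ω v| :=
    L0.mul_pinv_mul (p := g₀) (by rw [abs_abs, mul_comm]; exact hg₀ v)
  calc |ω v| = L0.pinv (pn μ v) * |ω v| * pn μ v := by rw [mul_comm, hcancel]
    _ ≤ d * pn μ v := L0.mul_le_mul hle le_rfl (pn_nonneg μ v) (hd.2 fun g hg => hg.1)

/-- Normalising a functional by its pointwise norm lands in the unit disc. -/
lemma inDualDisc_pinv_smul {ω : M →ₗ[L0 μ] L0 μ} {d : L0 μ} (hd : 0 ≤ d)
    (h : ∀ v, |ω v| ≤ d * pn μ v) : InDualDisc μ (L0.pinv d • ω) := by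
  intro v
  rw [LinearMap.smul_apply, smul_eq_mul, L0.abs_mul, abs_of_nonneg (L0.pinv_nonneg hd)]
  exact L0.pinv_mul_le (pn_nonneg μ v) hd (by rw [mul_comm]; exact h v)

lemma exists_isLUB_epsReps (α : M ⊗[L0 μ] N) : ∃ b, IsLUB (epsReps μ α) b := by
  obtain ⟨n, v, w, hα⟩ := TensorProduct.exists_sum_tmul_eq α
  refine L0.exists_isLUB ⟨_, n, v, w, 0, 0, ?_, ?_, hα, rfl⟩
    ⟨∑ i, pn μ (v i) * pn μ (w i), ?_⟩
  · intro v
    simpa using pn_nonneg μ v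
  · intro w
    simpa using pn_nonneg μ w
  · rintro _ ⟨m, v', w', ω, η, hω, hη, hα', rfl⟩
    -- The value depends on `α` only, so it may be computed in the fixed representation.
    rw [← tmap_sum, ← hα', hα, tmap_sum]
    refine (L0.abs_sum_le _).trans (Finset.sum_le_sum fun i _ => ?_)
    rw [L0.abs_mul]
    exact L0.mul_le_mul (hω _) (hη _) (abs_nonneg _) (pn_nonneg μ _)

lemma exists_isGLB_piReps (α : M ⊗[L0 μ] N) : ∃ b, IsGLB (piReps μ α) b := by
  obtain ⟨n, v, w, hα⟩ := TensorProduct.exists_sum_tmul_eq α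
  refine L0.exists_isGLB ⟨_, n, v, w, hα, rfl⟩ ⟨0, ?_⟩
  rintro _ ⟨m, v', w', -, rfl⟩
  exact Finset.sum_nonneg fun i _ => L0.mul_nonneg (pn_nonneg μ _) (pn_nonneg μ _)

/-- An element of the dual unit disc has a pointwise norm, and that norm is at most `1`. -/
lemma InDualDisc.exists_norm {ω : M →ₗ[L0 μ] L0 μ} (hω : InDualDisc μ ω) :
    IsDual μ ω ∧ ∃ d, IsGLB (dualBddSet μ ⇑ω) d ∧ 0 ≤ d ∧ d ≤ 1 := by
  have h1 : (1 : L0 μ) ∈ dualBddSet μ ⇑ω := ⟨L0.zero_le_one, fun v => by simpa using hω v⟩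
  obtain ⟨d, hd⟩ := L0.exists_isGLB ⟨_, h1⟩ ⟨0, fun g hg => hg.1⟩
  exact ⟨⟨1, h1⟩, d, hd, hd.2 fun g hg => hg.1, hd.1 h1⟩

end Tensor

/-- characterisation of reasonable pointwise crossnorms. A pointwise norm
`c` on `ℳ ⊗ 𝒩` is a reasonable pointwise crossnorm — that is, (i) `c(v ⊗ w) ≤ |v||w|`, and
(ii) for all `ω ∈ ℳ*`, `η ∈ 𝒩*`, the functional `ω ⊗ η` is continuous w.r.t. `c` with
`|ω ⊗ η|_{c*} ≤ |ω||η|` (equivalently `|((ω ⊗ η))(α)| ≤ |ω||η| · c(α)` for all `α`) — if and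
only if `|α|_ε ≤ c(α) ≤ |α|_π` for every `α ∈ ℳ ⊗ 𝒩`. -/
theorem reasonable_crossnorm_characterisation
    (μ : Measure X) [SigmaFinite μ]
    (M : Type*) [AddCommGroup M] [Module (L0 μ) M] [BanachMod μ M]
    (N : Type*) [AddCommGroup N] [Module (L0 μ) N] [BanachMod μ N]
    (c : M ⊗[L0 μ] N → L0 μ)
    (hc_nonneg : ∀ α, 0 ≤ c α) (hc_zero : ∀ α, c α = 0 ↔ α = 0)
    (hc_add : ∀ α β, c (α + β) ≤ c α + c β)
    (hc_smul : ∀ (f : L0 μ) (α : M ⊗[L0 μ] N), c (f • α) = |f| * c α) :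
    ((∀ (v : M) (w : N), c (v ⊗ₜ[L0 μ] w) ≤ pn μ v * pn μ w)
      ∧ (∀ (ω : M →ₗ[L0 μ] L0 μ) (η : N →ₗ[L0 μ] L0 μ), IsDual μ ω → IsDual μ η →
          ∀ dω dη : L0 μ, IsGLB (dualBddSet μ ⇑ω) dω → IsGLB (dualBddSet μ ⇑η) dη →
          ∀ α : M ⊗[L0 μ] N,
            |TensorProduct.lift ((LinearMap.mul (L0 μ) (L0 μ)).compl₁₂ ω η) α| ≤
              dω * dη * c α))
    ↔ ((∀ (α : M ⊗[L0 μ] N) (b : L0 μ), IsLUB (epsReps μ α) b → b ≤ c α)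
        ∧ (∀ (α : M ⊗[L0 μ] N) (b : L0 μ), IsGLB (piReps μ α) b → c α ≤ b)) := by
  have hc0 : c 0 = 0 := (hc_zero 0).mpr rfl
  constructor
  · rintro ⟨hi, hii⟩
    refine ⟨fun α b hb => hb.2 ?_, fun α b hb => hb.2 ?_⟩
    · rintro _ ⟨n, v, w, ω, η, hω, hη, hα, rfl⟩
      obtain ⟨hωd, dω, hdω, hdω0, hdω1⟩ := hω.exists_norm μ
      obtain ⟨hηd, dη, hdη, hdη0, hdη1⟩ := hη.exists_norm μ
      rw [← tmap_sum, ← hα]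
      refine (hii ω η hωd hηd dω dη hdω hdη α).trans ?_
      have h1 : dω * dη ≤ 1 := by
        simpa using L0.mul_le_mul hdω1 hdη1 hdη0 L0.zero_le_one
      simpa using L0.mul_le_mul h1 le_rfl (hc_nonneg α) L0.zero_le_one
    · rintro _ ⟨n, v, w, hα, rfl⟩
      rw [hα]
      exact (Finset.le_sum_of_subadditive c hc0.le hc_add _ _).trans
        (Finset.sum_le_sum fun i _ => hi _ _)
  · rintro ⟨heps, hpi⟩
    refine ⟨fun v w => ?_, fun ω η hω hη dω dη hdω hdη α => ?_⟩
    · obtain ⟨b, hb⟩ := exists_isGLB_piReps μ (v ⊗ₜ[L0 μ] w)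
      exact (hpi _ b hb).trans (hb.1 ⟨1, fun _ => v, fun _ => w, by simp, by simp⟩)
    · have hω' := abs_le_of_isGLB μ hω hdω
      have hη' := abs_le_of_isGLB μ hη hdη
      have hdω0 : 0 ≤ dω := hdω.2 fun g hg => hg.1
      have hdη0 : 0 ≤ dη := hdη.2 fun g hg => hg.1
      obtain ⟨n, v, w, hα⟩ := TensorProduct.exists_sum_tmul_eq α
      obtain ⟨b, hb⟩ := exists_isLUB_epsReps μ α
      have hle : |tmap μ (L0.pinv dω • ω) (L0.pinv dη • η) α| ≤ c α := by
        refine le_trans (hb.1 ?_) (heps α b hb)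
        exact ⟨n, v, w, _, _, inDualDisc_pinv_smul μ hdω0 hω', inDualDisc_pinv_smul μ hdη0 hη',
          hα, by rw [← tmap_sum, ← hα]⟩
      have hscale : tmap μ ω η α = dω * dη * tmap μ (L0.pinv dω • ω) (L0.pinv dη • η) α := by
        rw [hα, tmap_sum, tmap_sum, Finset.mul_sum]
        refine Finset.sum_congr rfl fun i _ => ?_
        conv_lhs => rw [← L0.mul_pinv_mul (hω' (v i)), ← L0.mul_pinv_mul (hη' (w i))]
        simp only [LinearMap.smul_apply, smul_eq_mul]
        ring
      have hd : 0 ≤ dω * dη := L0.mul_nonneg hdω0 hdη0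
      change |tmap μ ω η α| ≤ _
      rw [hscale, L0.abs_mul, abs_of_nonneg hd]
      exact L0.mul_le_mul le_rfl hle (abs_nonneg _) hd

end Paper
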